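/- For distinct atoms p, q, r of L: the formula (p → (q ∨ r)) → ((p → q) ∨ (p → r)) satisfies ⊨ (p → (q ∨ r)) → ((p → q) ∨ (p → r)), but it is not derivable in intuitionistic propositional natural deduction, i.e. ⊬_IL (p → (q ∨ r)) → ((p → q) ∨ (p → r)). -/

import Mathlib

/-!
Validity on a base interprets the connectives by the corresponding connectives of the (classical)
metalanguage, so `⊨` validates every classical tautology, and the formula is one.

For underivability, natural deduction is sound for Kripke models (`IL.force`), and the formula fails
at the root of the fork with two maximal worlds, one forcing exactly `p, q` and the other exactly
`p, r`. Every world that forces `p` forces `q` or `r`, so the root forces `p → (q ∨ r)`; but the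
second leaf refutes `p → q` and the first refutes `p → r`.
-/

/-- Formulas of the propositional language L. -/
inductive Formula : Type
  | atom : ℕ → Formula
  | bot  : Formula
  | and  : Formula → Formula → Formula
  | or   : Formula → Formula → Formula
  | imp  : Formula → Formula → Formula
deriving DecidableEq

/-- Negation: ¬A := A → ⊥. -/
def Formula.neg (A : Formula) : Formula := .imp A .bot

/-- An atom: `some n` is the n-th propositional atom p_n, `none` is ⊥. -/
def atomFormula : Option ℕ → Formula
  | some n => .atom n
  | none   => .bot

/-- A production rule: finitely many atomic premises (none of which is ⊥)
    and an atomic conclusion (possibly ⊥). -/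
structure AtomicRule : Type where
  prems : List ℕ
  concl : Option ℕ

/-- An atomic base: a set of production rules. -/
abbrev AtomicBase : Type := Set AtomicRule

/-- Derivability ⊢_B a of an atom in a base B. -/
inductive AtomDerives (B : AtomicBase) : Option ℕ → Prop
  | rule (r : AtomicRule) (hr : r ∈ B)
      (h : ∀ p ∈ r.prems, AtomDerives B (some p)) : AtomDerives B r.concl

/-- B is consistent iff ⊥ is not derivable in B. -/
def Consistent (B : AtomicBase) : Prop := ¬ AtomDerives B none

/-- ⊨_B A (validity of A on the base B, i.e. ∅ ⊨_B A). -/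
def BValid (B : AtomicBase) : Formula → Prop
  | .atom n  => AtomDerives B (some n)
  | .bot     => AtomDerives B none
  | .and X Y => BValid B X ∧ BValid B Y
  | .or X Y  => BValid B X ∨ BValid B Y
  | .imp X Y => BValid B X → BValid B Y

/-- Γ ⊨_B A. -/
def BCons (B : AtomicBase) (Γ : Set Formula) (A : Formula) : Prop :=
  (∀ G ∈ Γ, BValid B G) → BValid B A

/-- Logical consequence Γ ⊨ A: Γ ⊨_B A on every consistent atomic base. -/
def Cons (Γ : Set Formula) (A : Formula) : Prop :=
  ∀ B : AtomicBase, Consistent B → BCons B Γ A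

/-- Intuitionistic propositional natural deduction. -/
inductive IL : Set Formula → Formula → Prop
  | ax    {Γ A} : A ∈ Γ → IL Γ A
  | andI  {Γ A B} : IL Γ A → IL Γ B → IL Γ (.and A B)
  | andE1 {Γ A B} : IL Γ (.and A B) → IL Γ A
  | andE2 {Γ A B} : IL Γ (.and A B) → IL Γ B
  | orI1  {Γ A B} : IL Γ A → IL Γ (.or A B)
  | orI2  {Γ A B} : IL Γ B → IL Γ (.or A B)
  | orE   {Γ A B C} : IL Γ (.or A B) → IL (insert A Γ) C → IL (insert B Γ) C → IL Γ C
  | impI  {Γ A B} : IL (insert A Γ) B → IL Γ (.imp A B)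
  | impE  {Γ A B} : IL Γ (.imp A B) → IL Γ A → IL Γ B
  | botE  {Γ A} : IL Γ .bot → IL Γ A

/-- Classical propositional natural deduction: IL + double negation elimination. -/
inductive CL : Set Formula → Formula → Prop
  | ax    {Γ A} : A ∈ Γ → CL Γ A
  | andI  {Γ A B} : CL Γ A → CL Γ B → CL Γ (.and A B)
  | andE1 {Γ A B} : CL Γ (.and A B) → CL Γ A
  | andE2 {Γ A B} : CL Γ (.and A B) → CL Γ B
  | orI1  {Γ A B} : CL Γ A → CL Γ (.or A B)
  | orI2  {Γ A B} : CL Γ B → CL Γ (.or A B)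
  | orE   {Γ A B C} : CL Γ (.or A B) → CL (insert A Γ) C → CL (insert B Γ) C → CL Γ C
  | impI  {Γ A B} : CL (insert A Γ) B → CL Γ (.imp A B)
  | impE  {Γ A B} : CL Γ (.imp A B) → CL Γ A → CL Γ B
  | botE  {Γ A} : CL Γ .bot → CL Γ A
  | dne   {Γ A} : CL Γ ((A.neg).neg) → CL Γ A

/-- The order of the two-pronged fork: `none` is the root, below the two leaves `some true` and
`some false`. -/
def ForkLE (w v : Option Bool) : Prop := w = none ∨ w = v

theorem ForkLE.trans {u v w : Option Bool} (h₁ : ForkLE u v) (h₂ : ForkLE v w) : ForkLE u w := by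
  rcases h₁ with h₁ | rfl
  · exact Or.inl h₁
  · exact h₂

/-- The valuation on the fork: the leaf `some true` satisfies exactly `p` and `q`, the leaf
`some false` exactly `p` and `r`, and the root satisfies no atom. -/
def forkVal (p q r : ℕ) : Option Bool → ℕ → Prop
  | none, _ => False
  | some true, n => n = p ∨ n = q
  | some false, n => n = p ∨ n = r

/-- Kripke forcing on the fork for an arbitrary valuation `V` of the atoms. -/
def Force (V : Option Bool → ℕ → Prop) : Formula → Option Bool → Prop
  | .atom n, w => V w n
  | .bot, _ => False
  | .and X Y, w => Force V X w ∧ Force V Y w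
  | .or X Y, w => Force V X w ∨ Force V Y w
  | .imp X Y, w => ∀ v, ForkLE w v → Force V X v → Force V Y v

theorem Force.mono {V : Option Bool → ℕ → Prop}
    (hV : ∀ w v n, ForkLE w v → V w n → V v n) {A : Formula} {w v : Option Bool}
    (hwv : ForkLE w v) (h : Force V A w) : Force V A v := by
  induction A with
  | atom n => exact hV w v n hwv h
  | bot => exact h
  | and X Y ihX ihY => exact ⟨ihX h.1, ihY h.2⟩
  | or X Y ihX ihY => exact h.imp ihX ihY
  | imp X Y _ _ => exact fun u hvu => h u (hwv.trans hvu)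

/-- Soundness of intuitionistic natural deduction for persistent valuations on the fork. -/
theorem IL.force {V : Option Bool → ℕ → Prop}
    (hV : ∀ w v n, ForkLE w v → V w n → V v n) {Γ : Set Formula} {A : Formula} (d : IL Γ A) :
    ∀ w, (∀ G ∈ Γ, Force V G w) → Force V A w := by
  induction d with
  | ax h => exact fun w hΓ => hΓ _ h
  | andI _ _ ih₁ ih₂ => exact fun w hΓ => ⟨ih₁ w hΓ, ih₂ w hΓ⟩
  | andE1 _ ih => exact fun w hΓ => (ih w hΓ).1
  | andE2 _ ih => exact fun w hΓ => (ih w hΓ).2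
  | orI1 _ ih => exact fun w hΓ => Or.inl (ih w hΓ)
  | orI2 _ ih => exact fun w hΓ => Or.inr (ih w hΓ)
  | orE _ _ _ ih ih₁ ih₂ =>
    intro w hΓ
    rcases ih w hΓ with h | h
    · exact ih₁ w (Set.forall_mem_insert.2 ⟨h, hΓ⟩)
    · exact ih₂ w (Set.forall_mem_insert.2 ⟨h, hΓ⟩)
  | impI _ ih =>
    intro w hΓ v hwv h
    exact ih v (Set.forall_mem_insert.2 ⟨h, fun G hG => (hΓ G hG).mono hV hwv⟩)
  | impE _ _ ih₁ ih₂ => exact fun w hΓ => ih₁ w hΓ w (Or.inr rfl) (ih₂ w hΓ)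
  | botE _ ih => exact fun w hΓ => (ih w hΓ).elim

theorem forkVal_mono (p q r : ℕ) (w v : Option Bool) (n : ℕ) (hwv : ForkLE w v)
    (h : forkVal p q r w n) : forkVal p q r v n := by
  rcases hwv with rfl | rfl
  · exact h.elim
  · exact h

/-- For distinct atoms p, q, r: ⊨ (p → (q ∨ r)) → ((p → q) ∨ (p → r)),
    but this formula is not derivable in intuitionistic natural deduction. -/
theorem kreisel_putnam_witness (p q r : ℕ)
    (hpq : p ≠ q) (hpr : p ≠ r) (hqr : q ≠ r) :
    Cons ∅ (((Formula.atom p).imp ((Formula.atom q).or (Formula.atom r))).imp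
        (((Formula.atom p).imp (Formula.atom q)).or
          ((Formula.atom p).imp (Formula.atom r)))) ∧
      ¬ IL ∅ (((Formula.atom p).imp ((Formula.atom q).or (Formula.atom r))).imp
        (((Formula.atom p).imp (Formula.atom q)).or
          ((Formula.atom p).imp (Formula.atom r)))) := by
  constructor
  · intro B _ _
    simp only [BValid]
    tauto
  · intro d
    have key := d.force (forkVal_mono p q r) none (by simp) none (Or.inl rfl)
    have hprem : Force (forkVal p q r) ((Formula.atom p).imp ((Formula.atom q).or (Formula.atom r)))
        none := by
      rintro (_ | _ | _) _ hp
      · exact hp.elim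
      · exact Or.inr (Or.inr rfl)
      · exact Or.inl (Or.inr rfl)
    rcases key hprem with h | h
    · rcases h (some false) (Or.inl rfl) (Or.inl rfl) with h | h
      · exact hpq h.symm
      · exact hqr h
    · rcases h (some true) (Or.inl rfl) (Or.inl rfl) with h | h
      · exact hpr h.symm
      · exact hqr h.symm
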